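/- Let G be a bipartite graph with fixed parts A and B. Then the following three statements are equivalent: (1) either G is nonempty and G' is the disjoint union of complete bipartite graphs, or G is empty but the sets A and B are infinite; (2) G is proximinal for an ultrametric space (X,d) with X = A ∪ B; (3) G is proximinal for some ultrametric space. -/

import Mathlib

open Set

/-- A semimetric on a set `X`: a symmetric, nonnegative distance function
vanishing exactly on the diagonal. -/
structure IsSemimetric {X : Type*} (d : X → X → ℝ) : Prop where
  nonneg : ∀ x y, 0 ≤ d x y
  symm : ∀ x y, d x y = d y x
  eq_zero_iff : ∀ x y, d x y = 0 ↔ x = y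

/-- A metric: a semimetric satisfying the triangle inequality. -/
def IsMetric {X : Type*} (d : X → X → ℝ) : Prop :=
  IsSemimetric d ∧ ∀ x y z, d x y ≤ d x z + d z y

/-- An ultrametric: a semimetric satisfying the strong triangle inequality
(which implies the triangle inequality). -/
def IsUltrametric {X : Type*} (d : X → X → ℝ) : Prop :=
  IsSemimetric d ∧ ∀ x y z, d x y ≤ max (d x z) (d z y)

/-- `dist(A,B) = inf {d a b : a ∈ A, b ∈ B}`. -/
noncomputable def SetDist {X : Type*} (d : X → X → ℝ) (A B : Set X) : ℝ :=
  sInf (Set.image2 d A B)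

/-- `A` is proximinal in `(X,d)`: every point of `X` has a best approximation in `A`. -/
def Proximinal {X : Type*} (d : X → X → ℝ) (A : Set X) : Prop :=
  ∀ x : X, ∃ a ∈ A, d x a = sInf ((d x) '' A)

/-- `G` is the proximinal graph `G_{X,d}(A,B)`: a bipartite graph with (nonempty,
disjoint, proximinal) parts `A` and `B`, whose vertex set is `A ∪ B` (all other
points of the ambient type are isolated and are not vertices of the graph), and in
which `a ∈ A` and `b ∈ B` are adjacent iff `d a b = dist(A,B)`. -/
structure ProximinalFor {X : Type*} (d : X → X → ℝ) (G : SimpleGraph X) (A B : Set X) : Prop where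
  nonemptyA : A.Nonempty
  nonemptyB : B.Nonempty
  disj : Disjoint A B
  proxA : Proximinal d A
  proxB : Proximinal d B
  edges_between : ∀ u v, G.Adj u v → (u ∈ A ∧ v ∈ B) ∨ (u ∈ B ∧ v ∈ A)
  adj_iff : ∀ a ∈ A, ∀ b ∈ B, (G.Adj a b ↔ d a b = SetDist d A B)

/-- `G` is a farthest graph for `(X,d)` with parts `A`, `B`: `a ∈ A` and `b ∈ B`
are adjacent iff `d a b = sup {d x y : x ∈ A, y ∈ B}`, i.e. iff `d a b` is an upper
bound of all the cross distances. -/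
structure FarthestFor {X : Type*} (d : X → X → ℝ) (G : SimpleGraph X) (A B : Set X) : Prop where
  nonemptyA : A.Nonempty
  nonemptyB : B.Nonempty
  disj : Disjoint A B
  edges_between : ∀ u v, G.Adj u v → (u ∈ A ∧ v ∈ B) ∨ (u ∈ B ∧ v ∈ A)
  adj_iff : ∀ a ∈ A, ∀ b ∈ B, (G.Adj a b ↔ ∀ x ∈ A, ∀ y ∈ B, d x y ≤ d a b)

universe u

/-- The subgraph `G'` of `G` induced by the non-isolated vertices (whose vertex set
is `G.support` and whose edge set is `E(G)`) is a disjoint union of complete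
bipartite graphs: there is a family of pairwise disjoint complete bipartite graphs,
with parts `C i`, `D i`, whose vertex sets cover `G.support` and whose edges are
exactly the edges of `G`. -/
def SupportIsDisjointUnionOfCompleteBipartite {V : Type u} (G : SimpleGraph V) : Prop :=
  ∃ (ι : Type u) (C D : ι → Set V),
    (∀ i, (C i).Nonempty) ∧ (∀ i, (D i).Nonempty) ∧ (∀ i, Disjoint (C i) (D i)) ∧
    (Pairwise fun i j => Disjoint (C i ∪ D i) (C j ∪ D j)) ∧
    (⋃ i, C i ∪ D i) = G.support ∧
    (∀ u v, G.Adj u v ↔ ∃ i, (u ∈ C i ∧ v ∈ D i) ∨ (u ∈ D i ∧ v ∈ C i))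


theorem aux_prox {X : Type*} {d : X → X → ℝ} (h0 : ∀ x y, 0 ≤ d x y) {A : Set X} {x a : X}
    (ha : a ∈ A) (h : ∀ y ∈ A, d x a ≤ d x y) : d x a = sInf ((d x) '' A) := by
  symm
  apply IsLeast.csInf_eq
  exact ⟨⟨a, ha, rfl⟩, by rintro _ ⟨y, hy, rfl⟩; exact h y hy⟩

theorem aux_dist {X : Type*} {d : X → X → ℝ} {A B : Set X} {a b : X}
    (ha : a ∈ A) (hb : b ∈ B) (h : ∀ x ∈ A, ∀ y ∈ B, d a b ≤ d x y) :
    SetDist d A B = d a b := by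
  apply IsLeast.csInf_eq
  exact ⟨⟨a, ha, b, hb, rfl⟩, by rintro _ ⟨x, hx, y, hy, rfl⟩; exact h x hx y hy⟩

theorem aux_le {X : Type*} {d : X → X → ℝ} (h0 : ∀ x y, 0 ≤ d x y) {A B : Set X} {a b : X}
    (ha : a ∈ A) (hb : b ∈ B) : SetDist d A B ≤ d a b := by
  apply csInf_le
  · exact ⟨0, by rintro _ ⟨x, hx, y, hy, rfl⟩; exact h0 x y⟩
  · exact ⟨a, ha, b, hb, rfl⟩

theorem aux_fin {X : Type*} {d : X → X → ℝ} (h0 : ∀ x y, 0 ≤ d x y) {A B : Set X}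
    (hA : A.Nonempty) (hf : A.Finite) (hB : Proximinal d B) :
    ∃ a ∈ A, ∃ b ∈ B, d a b = SetDist d A B := by
  choose p hp hp2 using hB
  obtain ⟨a, ha, hmin⟩ := Set.exists_min_image A (fun a => d a (p a)) hf hA
  refine ⟨a, ha, p a, hp a, (aux_dist ha (hp a) ?_).symm⟩
  intro x hx y hy
  refine (hmin x hx).trans ?_
  show d x (p x) ≤ d x y
  rw [hp2 x]
  apply csInf_le
  · exact ⟨0, by rintro _ ⟨z, hz, rfl⟩; exact h0 x z⟩
  · exact ⟨y, hy, rfl⟩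

theorem aux_surj {V : Type*} {A : Set V} (hA : A.Infinite) :
    ∃ g : V → ℕ, ∀ n, ∃ a ∈ A, g a = n := by
  haveI := hA.to_subtype
  let e : ℕ ↪ A := Infinite.natEmbedding A
  have he : Function.Injective (fun n => (e n : V)) :=
    Subtype.val_injective.comp e.injective
  exact ⟨Function.invFun (fun n => (e n : V)), fun n =>
    ⟨e n, (e n).2, Function.leftInverse_invFun he n⟩⟩

/-- The distance `max (r x) (r y)` off the diagonal is an ultrametric. -/
theorem aux_max {V : Type*} [DecidableEq V] (r : V → ℝ) (hr : ∀ x, 1 < r x) :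
    IsUltrametric (fun x y => if x = y then 0 else max (r x) (r y)) := by
  refine ⟨⟨?_, ?_, ?_⟩, ?_⟩
  · intro x y
    have := hr x
    split_ifs
    · rfl
    · exact le_max_of_le_left (by linarith)
  · intro x y
    simp only [eq_comm (a := x), max_comm (r x)]
  · intro x y
    have := hr x
    have h2 : r x ≤ max (r x) (r y) := le_max_left _ _
    split_ifs with h
    · simp [h]
    · simp only [h, iff_false]; linarith
  · intro x y z
    have := hr x
    have := hr y
    have := hr z
    dsimp only
    split_ifs <;> grind

theorem aux_case2 {V : Type u} (G : SimpleGraph V) (A B : Set V)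
    (hA : A.Nonempty) (hB : B.Nonempty) (hAB : Disjoint A B)
    (hcover : A ∪ B = Set.univ)
    (hbip : ∀ u v, G.Adj u v → (u ∈ A ∧ v ∈ B) ∨ (u ∈ B ∧ v ∈ A))
    (hG : ∀ u v, ¬ G.Adj u v) (hAi : A.Infinite) (hBi : B.Infinite) :
    ∃ d : V → V → ℝ, IsUltrametric d ∧ ProximinalFor d G A B := by
  classical
  obtain ⟨gA, hgA⟩ := aux_surj hAi
  obtain ⟨gB, hgB⟩ := aux_surj hBi
  let g : V → ℕ := fun x => if x ∈ A then gA x else gB x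
  have hA' : ∀ n, ∃ a ∈ A, g a = n := fun n => by
    obtain ⟨a, ha, h⟩ := hgA n
    exact ⟨a, ha, by simp [g, ha, h]⟩
  have hB' : ∀ n, ∃ a ∈ B, g a = n := fun n => by
    obtain ⟨a, ha, h⟩ := hgB n
    have : a ∉ A := fun h => Set.disjoint_left.1 hAB h ha
    exact ⟨a, ha, by simp [g, this, h]⟩
  let r : V → ℝ := fun x => 1 + 1 / ((g x : ℝ) + 1)
  have hr : ∀ x, 1 < r x := fun x => by
    have : 0 < 1 / ((g x : ℝ) + 1) := by positivity
    simp only [r]; linarith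
  have hU := aux_max r hr
  set d : V → V → ℝ := fun x y => if x = y then 0 else max (r x) (r y) with hd
  have h0 := hU.1.nonneg
  have key : ∀ S : Set V, (∀ n, ∃ a ∈ S, g a = n) → Proximinal d S := by
    intro S hS x
    by_cases hx : x ∈ S
    · refine ⟨x, hx, aux_prox h0 hx fun y _ => ?_⟩
      rw [(hU.1.eq_zero_iff x x).2 rfl]
      exact h0 x y
    · obtain ⟨a, ha, hga⟩ := hS (g x)
      refine ⟨a, ha, aux_prox h0 ha fun y hy => ?_⟩
      have h1 : x ≠ a := fun h => hx (h ▸ ha)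
      have h2 : x ≠ y := fun h => hx (h ▸ hy)
      have h3 : r a = r x := by simp [r, hga]
      simp only [hd, h1, h2, if_false, h3]
      simp
  refine ⟨d, hU, hA, hB, hAB, key A hA', key B hB', hbip, ?_⟩
  intro a ha b hb
  refine iff_of_false (hG a b) fun h => ?_
  have hab : a ≠ b := fun h => Set.disjoint_left.1 hAB ha (h ▸ hb)
  obtain ⟨n, hn⟩ := exists_nat_one_div_lt (show 0 < r a - 1 by linarith [hr a])
  obtain ⟨a', ha', hga⟩ := hA' n
  obtain ⟨b', hb', hgb⟩ := hB' n
  have hab' : a' ≠ b' := fun h => Set.disjoint_left.1 hAB ha' (h ▸ hb')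
  have hle := aux_le h0 ha' hb'
  rw [← h] at hle
  have h1 : d a' b' = 1 + 1 / ((n : ℝ) + 1) := by simp [hd, hab', r, hga, hgb]
  have h2 : r a ≤ d a b := by simp [hd, hab]
  linarith

theorem aux_case1 {V : Type u} (G : SimpleGraph V) (A B : Set V)
    (hA : A.Nonempty) (hB : B.Nonempty) (hAB : Disjoint A B)
    (hbip : ∀ u v, G.Adj u v → (u ∈ A ∧ v ∈ B) ∨ (u ∈ B ∧ v ∈ A))
    (hG : ∃ u v, G.Adj u v) (hS : SupportIsDisjointUnionOfCompleteBipartite G) :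
    ∃ d : V → V → ℝ, IsUltrametric d ∧ ProximinalFor d G A B := by
  classical
  obtain ⟨ι, C, D, hC, hD, hCD, hpw, -, hadj⟩ := hS
  have hAB' : ∀ x, x ∈ A → x ∈ B → False := fun x h h' => Set.disjoint_left.1 hAB h h'
  let R : V → V → Prop := fun x y => ∃ i, x ∈ C i ∪ D i ∧ y ∈ C i ∪ D i
  have hRs : ∀ x y, R x y → R y x := fun x y ⟨i, h1, h2⟩ => ⟨i, h2, h1⟩
  have hRt : ∀ x y z, R x z → R z y → R x y := by
    rintro x y z ⟨i, h1, h2⟩ ⟨j, h3, h4⟩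
    have : i = j := by
      by_contra hij
      exact Set.disjoint_left.1 (hpw hij) h2 h3
    subst this
    exact ⟨i, h1, h4⟩
  have hRadj : ∀ a ∈ A, ∀ b ∈ B, (R a b ↔ G.Adj a b) := by
    intro a ha b hb
    constructor
    · rintro ⟨i, h1, h2⟩
      rcases h1 with h1 | h1 <;> rcases h2 with h2 | h2
      · obtain ⟨z, hz⟩ := hD i
        have e1 := hbip a z ((hadj _ _).2 ⟨i, .inl ⟨h1, hz⟩⟩)
        have e2 := hbip b z ((hadj _ _).2 ⟨i, .inl ⟨h2, hz⟩⟩)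
        have := hAB' a; have := hAB' b; have := hAB' z
        tauto
      · exact (hadj _ _).2 ⟨i, .inl ⟨h1, h2⟩⟩
      · exact (hadj _ _).2 ⟨i, .inr ⟨h1, h2⟩⟩
      · obtain ⟨z, hz⟩ := hC i
        have e1 := hbip a z ((hadj _ _).2 ⟨i, .inr ⟨h1, hz⟩⟩)
        have e2 := hbip b z ((hadj _ _).2 ⟨i, .inr ⟨h2, hz⟩⟩)
        have := hAB' a; have := hAB' b; have := hAB' z
        tauto
    · intro h
      obtain ⟨i, h | h⟩ := (hadj _ _).1 h
      · exact ⟨i, .inl h.1, .inr h.2⟩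
      · exact ⟨i, .inr h.1, .inl h.2⟩
  clear_value R
  let n : V → V → ℕ := fun x y => if x = y then 0 else if R x y then 1 else 2
  let d : V → V → ℝ := fun x y => (n x y : ℝ)
  have hU : IsUltrametric d := by
    refine ⟨⟨fun x y => Nat.cast_nonneg _, ?_, ?_⟩, ?_⟩
    · intro x y
      have := hRs x y; have := hRs y x
      simp only [d, n]
      congr 1
      split_ifs <;> grind
    · intro x y
      simp only [d, n, Nat.cast_eq_zero]
      split_ifs <;> grind
    · intro x y z
      have := hRt x y z
      simp only [d]
      rw [← Nat.cast_max, Nat.cast_le]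
      simp only [n]
      split_ifs <;> grind
  have h0 := hU.1.nonneg
  have key : ∀ S : Set V, S.Nonempty → Proximinal d S := by
    intro S hS x
    let m := Function.argminOn (n x) S hS
    refine ⟨m, Function.argminOn_mem _ _ _, aux_prox h0 (Function.argminOn_mem _ _ _) ?_⟩
    intro y hy
    simp only [d, Nat.cast_le]
    exact Function.argminOn_le (n x) S hy
  have hone : ∀ a ∈ A, ∀ b ∈ B, 1 ≤ d a b ∧ (G.Adj a b ↔ d a b = 1) := by
    intro a ha b hb
    have hab : a ≠ b := fun h => hAB' a ha (h ▸ hb)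
    rw [← hRadj a ha b hb]
    simp only [d, n, Nat.one_le_cast, Nat.cast_eq_one]
    split_ifs <;> grind
  have hdist : SetDist d A B = 1 := by
    obtain ⟨a, ha, b, hb, hab⟩ : ∃ a ∈ A, ∃ b ∈ B, G.Adj a b := by
      obtain ⟨u, v, h⟩ := hG
      rcases hbip u v h with h' | h'
      · exact ⟨u, h'.1, v, h'.2, h⟩
      · exact ⟨v, h'.2, u, h'.1, h.symm⟩
    have h1 := (hone a ha b hb).2.1 hab
    rw [← h1]
    apply aux_dist ha hb
    intro x hx y hy
    rw [h1]
    exact (hone x hx y hy).1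
  refine ⟨d, hU, hA, hB, hAB, key A hA, key B hB, hbip, ?_⟩
  intro a ha b hb
  rw [hdist]
  exact (hone a ha b hb).2

theorem aux_conv1 {V : Type u} (G : SimpleGraph V) (A B : Set V)
    (hAB : Disjoint A B) (hcover : A ∪ B = Set.univ)
    (hbip : ∀ u v, G.Adj u v → (u ∈ A ∧ v ∈ B) ∨ (u ∈ B ∧ v ∈ A))
    (d : V → V → ℝ) (hU : IsUltrametric d) (hP : ProximinalFor d G A B) :
    SupportIsDisjointUnionOfCompleteBipartite G := by
  obtain ⟨⟨h0, hs, hz⟩, ht⟩ := hU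
  set δ := SetDist d A B with hδ
  have hAB' : ∀ x, x ∈ A → x ∈ B → False := fun x h h' => Set.disjoint_left.1 hAB h h'
  have hcov : ∀ x, x ∈ A ∨ x ∈ B := fun x => by
    have : x ∈ A ∪ B := hcover ▸ Set.mem_univ x
    exact this
  have hδ0 : 0 ≤ δ := by
    apply Real.sInf_nonneg
    rintro _ ⟨x, -, y, -, rfl⟩
    exact h0 x y
  have hadj : ∀ a ∈ A, ∀ b ∈ B, (G.Adj a b ↔ d a b ≤ δ) := by
    intro a ha b hb
    rw [hP.adj_iff a ha b hb]
    exact ⟨fun h => h.le, fun h => le_antisymm h (aux_le h0 ha hb)⟩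
  have hadj2 : ∀ a b, G.Adj a b → d a b ≤ δ := by
    intro a b h
    rcases hbip a b h with h' | h'
    · exact (hadj a h'.1 b h'.2).1 h
    · rw [hs]; exact (hadj b h'.2 a h'.1).1 h.symm
  have htr : ∀ x y z, d x z ≤ δ → d z y ≤ δ → d x y ≤ δ :=
    fun x y z h1 h2 => (ht x y z).trans (max_le h1 h2)
  have hself : ∀ x, d x x ≤ δ := fun x => by rw [(hz x x).2 rfl]; exact hδ0
  have hboth : ∀ u ∈ G.support, (∃ a ∈ A, d u a ≤ δ) ∧ (∃ b ∈ B, d u b ≤ δ) := by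
    rintro u ⟨w, hw⟩
    have := hadj2 u w hw
    rcases hbip u w hw with h' | h'
    · exact ⟨⟨u, h'.1, hself u⟩, ⟨w, h'.2, this⟩⟩
    · exact ⟨⟨w, h'.2, this⟩, ⟨u, h'.1, hself u⟩⟩
  have hsupp : ∀ u ∈ G.support, ∀ v, d u v ≤ δ → v ∈ G.support := by
    intro u hu v huv
    obtain ⟨⟨a, ha, hua⟩, ⟨b, hb, hub⟩⟩ := hboth u hu
    rw [hs] at huv
    rcases hcov v with hv | hv
    · exact ⟨b, (hadj v hv b hb).2 (htr _ _ _ huv hub)⟩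
    · refine ⟨a, ((hadj a ha v hv).2 ?_).symm⟩
      rw [hs]; exact htr _ _ _ huv hua
  refine ⟨{S : Set V // ∃ u ∈ G.support, S = {v | d u v ≤ δ}},
    fun S => S.1 ∩ A, fun S => S.1 ∩ B, ?_, ?_, ?_, ?_, ?_, ?_⟩
  · rintro ⟨_, u, hu, rfl⟩
    obtain ⟨a, ha, h⟩ := (hboth u hu).1
    exact ⟨a, h, ha⟩
  · rintro ⟨_, u, hu, rfl⟩
    obtain ⟨a, ha, h⟩ := (hboth u hu).2
    exact ⟨a, h, ha⟩
  · intro S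
    exact hAB.mono Set.inter_subset_right Set.inter_subset_right
  · rintro ⟨_, u, hu, rfl⟩ ⟨_, v, hv, rfl⟩ hne
    rw [Set.disjoint_left]
    intro x hx hy
    apply hne
    have h1 : d u x ≤ δ := by rcases hx with hx | hx <;> exact hx.1
    have h2 : d v x ≤ δ := by rcases hy with hx | hx <;> exact hx.1
    apply Subtype.ext
    have h3 : d u v ≤ δ := htr _ _ x h1 (by rw [hs]; exact h2)
    have h4 : d v u ≤ δ := by rw [hs]; exact h3
    ext w
    exact ⟨fun h => htr _ _ u h4 h, fun h => htr _ _ v h3 h⟩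
  · ext x
    simp only [Set.mem_iUnion]
    constructor
    · rintro ⟨⟨_, u, hu, rfl⟩, hx⟩
      exact hsupp u hu x (by rcases hx with hx | hx <;> exact hx.1)
    · intro hx
      refine ⟨⟨_, x, hx, rfl⟩, ?_⟩
      rcases hcov x with h | h
      · exact .inl ⟨hself x, h⟩
      · exact .inr ⟨hself x, h⟩
  · intro u v
    constructor
    · intro h
      have hu : u ∈ G.support := ⟨v, h⟩
      refine ⟨⟨_, u, hu, rfl⟩, ?_⟩
      rcases hbip u v h with h' | h'
      · exact .inl ⟨⟨hself u, h'.1⟩, ⟨hadj2 _ _ h, h'.2⟩⟩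
      · exact .inr ⟨⟨hself u, h'.1⟩, ⟨hadj2 _ _ h, h'.2⟩⟩
    · rintro ⟨⟨_, w, hw, rfl⟩, h | h⟩
      · obtain ⟨⟨h1, h2⟩, ⟨h3, h4⟩⟩ := h
        exact (hadj u h2 v h4).2 (htr _ _ w (by rw [hs]; exact h1) h3)
      · obtain ⟨⟨h1, h2⟩, ⟨h3, h4⟩⟩ := h
        exact ((hadj v h4 u h2).2 (htr _ _ w (by rw [hs]; exact h3) h1)).symm

theorem aux_pull {V X : Type u} (G : SimpleGraph V) (A B : Set V)
    (hA : A.Nonempty) (hB : B.Nonempty) (hAB : Disjoint A B)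
    (hbip : ∀ u v, G.Adj u v → (u ∈ A ∧ v ∈ B) ∨ (u ∈ B ∧ v ∈ A))
    (d : X → X → ℝ) (H : SimpleGraph X) (f : V → X) (hU : IsUltrametric d)
    (hP : ProximinalFor d H (f '' A) (f '' B)) (hf : Function.Injective f)
    (hadj : ∀ u v, (G.Adj u v ↔ H.Adj (f u) (f v))) :
    ∃ d : V → V → ℝ, IsUltrametric d ∧ ProximinalFor d G A B := by
  have key : ∀ S : Set V, Proximinal d (f '' S) → Proximinal (fun x y => d (f x) (f y)) S := by
    intro S hS x
    obtain ⟨_, ⟨a, ha, rfl⟩, h⟩ := hS (f x)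
    refine ⟨a, ha, ?_⟩
    rw [Set.image_image] at h
    exact h
  refine ⟨fun x y => d (f x) (f y), ⟨⟨fun x y => hU.1.nonneg _ _, fun x y => hU.1.symm _ _,
    fun x y => (hU.1.eq_zero_iff _ _).trans hf.eq_iff⟩, fun x y z => hU.2 _ _ _⟩,
    hA, hB, hAB, key A hP.proxA, key B hP.proxB, hbip, ?_⟩
  intro a ha b hb
  rw [hadj, hP.adj_iff _ ⟨a, ha, rfl⟩ _ ⟨b, hb, rfl⟩]
  simp only [SetDist, Set.image2_image_left, Set.image2_image_right]

/-- Theorem 2.9: for a bipartite graph `G` with fixed parts `A`, `B` (vertex set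
`A ∪ B = V`), the following are equivalent: (1) `G` is nonempty and `G'` is the
disjoint union of complete bipartite graphs, or `G` is empty but `A` and `B` are
infinite; (2) `G` is proximinal for an ultrametric space with ground set `A ∪ B`;
(3) `G` is proximinal for some ultrametric space (containing copies of `A`, `B`). -/
theorem stmt10 {V : Type u} (G : SimpleGraph V) (A B : Set V)
    (hA : A.Nonempty) (hB : B.Nonempty) (hAB : Disjoint A B)
    (hcover : A ∪ B = Set.univ)
    (hbip : ∀ u v, G.Adj u v → (u ∈ A ∧ v ∈ B) ∨ (u ∈ B ∧ v ∈ A)) :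
    List.TFAE [
      (G.edgeSet.Nonempty ∧ SupportIsDisjointUnionOfCompleteBipartite G) ∨
        (G.edgeSet = ∅ ∧ A.Infinite ∧ B.Infinite),
      ∃ d : V → V → ℝ, IsUltrametric d ∧ ProximinalFor d G A B,
      ∃ (X : Type u) (d : X → X → ℝ) (H : SimpleGraph X) (A' B' : Set X) (f : V → X),
        IsUltrametric d ∧ ProximinalFor d H A' B' ∧ Function.Injective f ∧
        f '' A = A' ∧ f '' B = B' ∧ ∀ u v, (G.Adj u v ↔ H.Adj (f u) (f v))] := by
  have hne : G.edgeSet.Nonempty ↔ ∃ u v, G.Adj u v := by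
    constructor
    · rintro ⟨e, he⟩
      induction e with
      | _ u v => exact ⟨u, v, he⟩
    · rintro ⟨u, v, h⟩
      exact ⟨s(u, v), h⟩
  tfae_have 1 → 2 := by
    rintro (⟨h1, h2⟩ | ⟨h1, h2, h3⟩)
    · exact aux_case1 G A B hA hB hAB hbip (hne.1 h1) h2
    · refine aux_case2 G A B hA hB hAB hcover hbip ?_ h2 h3
      intro u v h
      have := hne.2 ⟨u, v, h⟩
      rw [h1] at this
      exact Set.not_nonempty_empty this
  tfae_have 2 → 1 := by
    rintro ⟨d, hU, hP⟩
    rcases Set.eq_empty_or_nonempty G.edgeSet with h | h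
    · right
      have hno : ∀ u v, ¬ G.Adj u v := by
        intro u v h'
        have := hne.2 ⟨u, v, h'⟩
        rw [h] at this
        exact Set.not_nonempty_empty this
      refine ⟨h, fun hfin => ?_, fun hfin => ?_⟩
      · obtain ⟨a, ha, b, hb, hab⟩ := aux_fin hU.1.nonneg hA hfin hP.proxB
        exact hno a b ((hP.adj_iff a ha b hb).2 hab)
      · obtain ⟨b, hb, a, ha, hab⟩ := aux_fin hU.1.nonneg hB hfin hP.proxA
        refine hno a b ((hP.adj_iff a ha b hb).2 ?_)
        rw [hU.1.symm, hab, SetDist, SetDist, Set.image2_swap]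
        simp only [hU.1.symm]
    · exact .inl ⟨h, aux_conv1 G A B hAB hcover hbip d hU hP⟩
  tfae_have 2 → 3 := by
    rintro ⟨d, hU, hP⟩
    exact ⟨V, d, G, A, B, id, hU, hP, Function.injective_id, Set.image_id _, Set.image_id _,
      fun _ _ => Iff.rfl⟩
  tfae_have 3 → 2 := by
    rintro ⟨X, d, H, _, _, f, hU, hP, hf, rfl, rfl, hadj⟩
    exact aux_pull G A B hA hB hAB hbip d H f hU hP hf hadj
  tfae_finish
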